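/- Let G be a finite family of axis-aligned rectangles with layers G₁, …, G_k, let P ∼ G, and let F = G ⊙ A for some subset A ⊆ G of retrieved regions. Say a region R ∈ F is dominated in F if for every realization of F, the point of R is dominated by the point of some other region of F. Fix an index i and suppose that every region of G₁ ∪ … ∪ G_{i−1} is, in F, either a point region or dominated in F. Then every region R_a ∈ Gᵢ that is not retrieved and not dominated in F lies on OPF(F); equivalently, its top-right corner is not dominated by the top-right corner of any other region of F. -/

import Mathlib

/-- An axis-aligned rectangle `[x₁,x₂] × [y₁,y₂]` with `x₁ ≤ x₂` and `y₁ ≤ y₂`. -/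
structure Rect where
  x1 : ℝ
  x2 : ℝ
  y1 : ℝ
  y2 : ℝ
  hx : x1 ≤ x2
  hy : y1 ≤ y2

/-- The set of points of a rectangle. -/
def Rect.toSet (R : Rect) : Set (ℝ × ℝ) := Set.Icc R.x1 R.x2 ×ˢ Set.Icc R.y1 R.y2

/-- The top-right corner of a rectangle. -/
def Rect.tr (R : Rect) : ℝ × ℝ := (R.x2, R.y2)

/-- The bottom-left corner of a rectangle. -/
def Rect.bl (R : Rect) : ℝ × ℝ := (R.x1, R.y1)

/-- A rectangle is a point region if it is degenerate in both coordinates. -/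
def Rect.isPoint (R : Rect) : Prop := R.x1 = R.x2 ∧ R.y1 = R.y2

/-- The top facet `[x₁,x₂] × {y₂}` of a rectangle. -/
def Rect.topFacet (R : Rect) : Set (ℝ × ℝ) := Set.Icc R.x1 R.x2 ×ˢ ({R.y2} : Set ℝ)

/-- The right facet `{x₂} × [y₁,y₂]` of a rectangle. -/
def Rect.rightFacet (R : Rect) : Set (ℝ × ℝ) := ({R.x2} : Set ℝ) ×ˢ Set.Icc R.y1 R.y2

/-- `p` dominates `q` if `p` lies in the open top-right quadrant of `q`. -/
def dom (p q : ℝ × ℝ) : Prop := q.1 < p.1 ∧ q.2 < p.2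

/-- `p` dominates a rectangle `R` if it dominates every point of `R`. -/
def domR (p : ℝ × ℝ) (R : Rect) : Prop := ∀ q ∈ R.toSet, dom p q

/-- `P` is a realization of the family `F`. -/
def IsRealization {n : ℕ} (F : Fin n → Rect) (P : Fin n → ℝ × ℝ) : Prop :=
  ∀ i, P i ∈ (F i).toSet

/-- The outer Pareto front: indices `a` such that some point of `R_a` is dominated by no
point of any other region. -/
def OPF {n : ℕ} (F : Fin n → Rect) : Set (Fin n) :=
  {a | ∃ p ∈ (F a).toSet, ∀ b, b ≠ a → ∀ q ∈ (F b).toSet, ¬ dom q p}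

/-- The inner Pareto front: points dominated in every realization of `F`. -/
def IPF {n : ℕ} (F : Fin n → Rect) : Set (ℝ × ℝ) :=
  {p' | ∀ P : Fin n → ℝ × ℝ, IsRealization F P → ∃ i, dom (P i) p'}

/-- The degenerate rectangle consisting of a single point. -/
def pointRect (p : ℝ × ℝ) : Rect := ⟨p.1, p.1, p.2, p.2, le_rfl, le_rfl⟩

open Classical in
/-- The family `F ⊙ A`: regions with index in `A` are retrieved, i.e. replaced by
the point region of the corresponding point of the realization `P`. -/
noncomputable def retrieve {n : ℕ} (F : Fin n → Rect) (P : Fin n → ℝ × ℝ)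
    (A : Set (Fin n)) : Fin n → Rect :=
  fun i => if i ∈ A then pointRect (P i) else F i

/-- `q` witnesses an outgoing dependency of `R_a` to `R_b`:
`q ∈ R_b`, (I) the top-right corner of `R_b` does not dominate `R_a`,
(II) `q ∉ IPF F`, and (III) `q ∈ R_a` or the top-right corner of `R_a` dominates `q`. -/
def depWitness {n : ℕ} (F : Fin n → Rect) (a b : Fin n) (q : ℝ × ℝ) : Prop :=
  q ∈ (F b).toSet ∧ ¬ domR (F b).tr (F a) ∧ q ∉ IPF F ∧
    (q ∈ (F a).toSet ∨ dom (F a).tr q)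

/-- `R_a` has an outgoing dependency in `F` to `R_b`. -/
def outDep {n : ℕ} (F : Fin n → Rect) (a b : Fin n) : Prop :=
  a ≠ b ∧ ∃ q, depWitness F a b q

/-- `R_a` is independent in `F` if it has no outgoing dependency to any region. -/
def indep {n : ℕ} (F : Fin n → Rect) (a : Fin n) : Prop := ∀ b, ¬ outDep F a b

/-- The outer Pareto front of the subfamily of `F` with indices in `S`. -/
def OPFon {n : ℕ} (F : Fin n → Rect) (S : Set (Fin n)) : Set (Fin n) :=
  {a | a ∈ S ∧ ∃ p ∈ (F a).toSet, ∀ b ∈ S, b ≠ a → ∀ q ∈ (F b).toSet, ¬ dom q p}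

/-- The regions remaining after removing the first `i` layers. -/
def remaining {n : ℕ} (F : Fin n → Rect) : ℕ → Set (Fin n)
  | 0 => Set.univ
  | i + 1 => remaining F i \ OPFon F (remaining F i)

/-- The `i`-th layer (0-indexed): the outer Pareto front of what remains after
removing the previous layers. -/
def layer {n : ℕ} (F : Fin n → Rect) (i : ℕ) : Set (Fin n) := OPFon F (remaining F i)

/-- Points dominated by no point of `S`. -/
def USet (S : Set (ℝ × ℝ)) : Set (ℝ × ℝ) := {p | ∀ s ∈ S, ¬ dom s p}

/-- The staircase of `S`: the topological boundary of `USet S`. -/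
def staircase (S : Set (ℝ × ℝ)) : Set (ℝ × ℝ) := frontier (USet S)

/-- `R_a` is dominated in `F`: in every realization of `F`, the point of `R_a`
is dominated by the point of some other region. -/
def dominatedIn {n : ℕ} (F : Fin n → Rect) (a : Fin n) : Prop :=
  ∀ Q : Fin n → ℝ × ℝ, IsRealization F Q → ∃ b, b ≠ a ∧ dom (Q b) (Q a)

/-- The permutation `σ` is realizable for the intervals `[a i, b i]`. -/
def realizable (k : ℕ) (a b : Fin k → ℝ) (σ : Equiv.Perm (Fin k)) : Prop :=
  ∃ z : Fin k → ℝ, Function.Injective z ∧ (∀ i, z i ∈ Set.Icc (a i) (b i)) ∧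
    StrictMono (fun i => z (σ i))

/-- The partial order along the Pareto front of the point sequence `P`:
`a ≺ b` iff both `P a` and `P b` lie on the Pareto front of `P` and `P a`
lies strictly to the left of, or strictly above, `P b`. -/
def precRel {n : ℕ} (P : Fin n → ℝ × ℝ) (a b : Fin n) : Prop :=
  (∀ c, c ≠ a → ¬ dom (P c) (P a)) ∧ (∀ c, c ≠ b → ¬ dom (P c) (P b)) ∧
    ((P a).1 < (P b).1 ∨ (P b).2 < (P a).2)

/-!
Whether a region lies on an outer Pareto front depends only on the top-right corners. If the corner
of `R_a` is dominated in `F`, then by finiteness it is dominated by the corner of some `R_b` on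
`OPF F`. Such an `R_b` is not dominated in `F`, and it is not a point region, since otherwise every
realization would have its point dominate that of `R_a`. Hence `R_b` is neither retrieved nor in an
earlier layer, so its corner already dominates that of `R_a` among the regions of `G` from which
layer `i` is extracted, contradicting `a ∈ layer G i`.
-/

section Dominance

variable {p p' q q' r : ℝ × ℝ}

lemma dom.trans (hpq : dom p q) (hqr : dom q r) : dom p r :=
  ⟨hqr.1.trans hpq.1, hqr.2.trans hpq.2⟩

lemma dom.mono (hp : p ≤ p') (hq : q' ≤ q) (h : dom p q) : dom p' q' :=
  ⟨hq.1.trans_lt (h.1.trans_le hp.1), hq.2.trans_lt (h.2.trans_le hp.2)⟩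

lemma dom.ne (h : dom p q) : p ≠ q := by
  rintro rfl
  exact lt_irrefl _ h.1

end Dominance

namespace Rect

variable {R : Rect} {q : ℝ × ℝ}

lemma tr_mem_toSet (R : Rect) : R.tr ∈ R.toSet :=
  ⟨⟨R.hx, le_rfl⟩, ⟨R.hy, le_rfl⟩⟩

lemma le_tr (hq : q ∈ R.toSet) : q ≤ R.tr :=
  ⟨hq.1.2, hq.2.2⟩

lemma isPoint.tr_le (hR : R.isPoint) (hq : q ∈ R.toSet) : R.tr ≤ q :=
  ⟨hR.1.ge.trans hq.1.1, hR.2.ge.trans hq.2.1⟩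

end Rect

lemma isPoint_pointRect (p : ℝ × ℝ) : (pointRect p).isPoint :=
  ⟨rfl, rfl⟩

section Families

variable {n : ℕ} {F G : Fin n → Rect} {a b : Fin n} {i : ℕ}

lemma isRealization_tr (F : Fin n → Rect) : IsRealization F fun b => (F b).tr :=
  fun b => (F b).tr_mem_toSet

lemma mem_OPFon_iff {S : Set (Fin n)} :
    a ∈ OPFon F S ↔ a ∈ S ∧ ∀ b ∈ S, b ≠ a → ¬ dom (F b).tr (F a).tr := by
  refine and_congr_right fun _ => ⟨?_, fun h => ?_⟩
  · rintro ⟨p, hp, hpS⟩ b hb hba hdom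
    exact hpS b hb hba _ (F b).tr_mem_toSet (hdom.mono le_rfl (Rect.le_tr hp))
  · exact ⟨(F a).tr, (F a).tr_mem_toSet, fun b hb hba q hq hdom =>
      h b hb hba (hdom.mono (Rect.le_tr hq) le_rfl)⟩

lemma OPF_eq_OPFon_univ (F : Fin n → Rect) : OPF F = OPFon F Set.univ := by
  simp only [OPF, OPFon, Set.mem_univ, true_and, forall_const]

lemma mem_OPF_iff : a ∈ OPF F ↔ ∀ b, b ≠ a → ¬ dom (F b).tr (F a).tr := by
  simp only [OPF_eq_OPFon_univ, mem_OPFon_iff, Set.mem_univ, true_and, forall_const]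

lemma exists_mem_OPF_dom_tr {p : ℝ × ℝ} (h : dom (F b).tr p) :
    ∃ c ∈ OPF F, dom (F c).tr p := by
  obtain ⟨c, hcp, hmax⟩ := Set.exists_max_image {c | dom (F c).tr p} (fun c => (F c).tr.1)
    (Set.toFinite _) ⟨b, h⟩
  refine ⟨c, mem_OPF_iff.2 fun d _ hdc => ?_, hcp⟩
  exact (hmax d (hdc.trans hcp)).not_gt hdc.1

lemma not_dominatedIn_of_mem_OPF (ha : a ∈ OPF F) : ¬ dominatedIn F a := by
  intro hdom
  obtain ⟨b, hba, hb⟩ := hdom _ (isRealization_tr F)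
  exact mem_OPF_iff.1 ha b hba hb

lemma dominatedIn_of_isPoint_of_dom_tr (hb : (F b).isPoint) (hdom : dom (F b).tr (F a).tr) :
    dominatedIn F a := fun _ hQ =>
  ⟨b, fun hba => hdom.ne (by rw [hba]), hdom.mono (hb.tr_le (hQ b)) (Rect.le_tr (hQ a))⟩

lemma mem_remaining_iff : b ∈ remaining G i ↔ ∀ j < i, b ∉ layer G j := by
  induction i with
  | zero => simp only [remaining, Set.mem_univ, Nat.not_lt_zero, false_imp_iff, implies_true]
  | succ i ih => rw [remaining, Set.mem_sdiff, ih, Nat.forall_lt_succ_right, layer]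

lemma retrieve_isPoint_of_mem (G : Fin n → Rect) (P : Fin n → ℝ × ℝ) {A : Set (Fin n)}
    (hb : b ∈ A) : (retrieve G P A b).isPoint := by
  rw [retrieve, if_pos hb]
  exact isPoint_pointRect (P b)

lemma retrieve_of_notMem (G : Fin n → Rect) (P : Fin n → ℝ × ℝ) {A : Set (Fin n)}
    (hb : b ∉ A) : retrieve G P A b = G b :=
  if_neg hb

theorem stmt11_general (hFG : ∀ b, (F b).isPoint ∨ (F b).tr ≤ (G b).tr)
    (hprev : ∀ j < i, ∀ b ∈ layer G j, (F b).isPoint ∨ dominatedIn F b)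
    (ha : a ∈ layer G i) (hGF : (G a).tr ≤ (F a).tr) (hnd : ¬ dominatedIn F a) :
    a ∈ OPF F ∧ ∀ b, b ≠ a → ¬ dom (F b).tr (F a).tr := by
  suffices haF : a ∈ OPF F from ⟨haF, mem_OPF_iff.1 haF⟩
  refine mem_OPF_iff.2 fun b₀ _ hb₀ => ?_
  obtain ⟨b, hbF, hdom⟩ := exists_mem_OPF_dom_tr hb₀
  have hb_not_point : ¬ (F b).isPoint := fun hb =>
    hnd (dominatedIn_of_isPoint_of_dom_tr hb hdom)
  have hb_remaining : b ∈ remaining G i := mem_remaining_iff.2 fun j hj hb =>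
    (hprev j hj b hb).elim hb_not_point (not_dominatedIn_of_mem_OPF hbF)
  have hdomG : dom (G b).tr (G a).tr := hdom.mono ((hFG b).resolve_left hb_not_point) hGF
  exact (mem_OPFon_iff.1 ha).2 b hb_remaining (fun hba => hdomG.ne (by rw [hba])) hdomG

end Families

/-- If every region of the layers before `i` is (in `F = G ⊙ A`) a point
region or dominated in `F`, then every non-retrieved, non-dominated region of layer `i`
lies on `OPF F`; equivalently, its top-right corner is not dominated by the top-right
corner of any other region of `F`. -/
theorem stmt11 {n : ℕ} (G : Fin n → Rect) (P : Fin n → ℝ × ℝ) (A : Set (Fin n))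
    (hP : IsRealization G P) (i : ℕ)
    (hprev : ∀ j < i, ∀ b ∈ layer G j,
      (retrieve G P A b).isPoint ∨ dominatedIn (retrieve G P A) b)
    (a : Fin n) (ha : a ∈ layer G i) (haA : a ∉ A)
    (hnd : ¬ dominatedIn (retrieve G P A) a) :
    a ∈ OPF (retrieve G P A) ∧
      ∀ b, b ≠ a → ¬ dom ((retrieve G P A) b).tr ((retrieve G P A) a).tr :=
  stmt11_general
    (fun b => (em (b ∈ A)).imp (retrieve_isPoint_of_mem G P) fun hb =>
      (congrArg Rect.tr (retrieve_of_notMem G P hb)).le)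
    hprev ha (congrArg Rect.tr (retrieve_of_notMem G P haA)).ge hnd
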